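/- If the formal power series Σ_{n≥0} b_n t^n with integer coefficients is algebraic over Q(t), then for every prime q the sequence (b_n mod q) is q-automatic. -/

import Mathlib

/-- A sequence `a : ℕ → S` is `b`-automatic if there is a finite automaton with output
(finite state set, transition function reading base-`b` digits, output map) computing it. -/
def IsAutomatic {S : Type*} (b : ℕ) (a : ℕ → S) : Prop :=
  ∃ (Q : Type) (_ : Fintype Q) (init : Q) (step : Q → ℕ → Q) (out : Q → S),
    ∀ n, a n = out ((Nat.digits b n).foldl step init)

/-!
Algebraicity of `f` over `R[X]` is a linear dependence among the power series `Xⁱ fʲ`, that is, the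
vanishing of minors of their coefficient matrix. Vanishing minors survive every ring homomorphism
out of the coefficient ring, so the reduction of `f` in a finite field `k` is algebraic over `k[X]`.

Let `q = #k`. As `f` is algebraic, the powers `f^(qⁱ)` are linearly dependent over `k[X]`. The
Cartier operators satisfy `Λᵣ (h * g ^ q) = Λᵣ h * g`; applying them strips common Frobenius twists
from a relation until it expresses `d * f`, with `d ≠ 0`, through the `f^(qⁱ)` with `i ≥ 1`. If `D`
bounds the degrees occurring there, the series `h` for which `d * h` is a combination of the
`f^(qⁱ)` with coefficients of degree at most `D` form a finite set containing `f` and stable under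
all `Λᵣ`. This set is the state space of an automaton that reads the digits of `n` from the least
significant one and applies `Λᵣ` on reading `r`.
-/

open scoped Polynomial PowerSeries

section Automata

variable {S : Type*} {b : ℕ}

theorem IsAutomatic.of_finite {Q : Type*} [Finite Q] {a : ℕ → S} (init : Q) (step : Q → ℕ → Q)
    (out : Q → S) (h : ∀ n, a n = out ((Nat.digits b n).foldl step init)) : IsAutomatic b a := by
  obtain ⟨N, ⟨e⟩⟩ := Finite.exists_equiv_fin Q
  refine ⟨Fin N, inferInstance, e init, fun s r => e (step (e.symm s) r), out ∘ e.symm, fun n => ?_⟩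
  rw [h, List.foldl_hom e (g₁ := step) fun s r => by rw [e.symm_apply_apply], Function.comp_apply,
    e.symm_apply_apply]

theorem apply_eq_foldl_digits (hb : 1 < b) (n : ℕ) (a : ℕ → S) :
    a n = (Nat.digits b n).foldl (fun s r k => s (b * k + r % b)) a 0 := by
  induction n using Nat.strong_induction_on generalizing a with
  | _ n ih =>
    rcases n.eq_zero_or_pos with rfl | hn
    · simp
    · rw [Nat.digits_def' hb hn, List.foldl_cons, ← ih _ (Nat.div_lt_self hn hb), Nat.mod_mod,
        Nat.div_add_mod]

theorem isAutomatic_of_finite_of_forall_subsequence_mem (hb : 1 < b) {H : Set (ℕ → S)}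
    (hfin : H.Finite) (hH : ∀ s ∈ H, ∀ r < b, (fun n => s (b * n + r)) ∈ H) {a : ℕ → S}
    (ha : a ∈ H) : IsAutomatic b a := by
  have : Finite H := hfin
  let step (s : H) (r : ℕ) : H := ⟨_, hH s s.2 (r % b) (Nat.mod_lt r (by omega))⟩
  refine .of_finite ⟨a, ha⟩ step (fun s => s.1 0) fun n => ?_
  rw [apply_eq_foldl_digits hb n a]
  exact congrFun (List.foldl_hom Subtype.val (g₁ := step) (init := ⟨a, ha⟩) fun _ _ => rfl) 0

end Automata

section LinearAlgebra

theorem exists_det_ne_zero_of_linearIndependent {ι κ k : Type*} [Fintype ι] [DecidableEq ι]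
    [Field k] {v : ι → κ → k} (hv : LinearIndependent k v) :
    ∃ e : ι → κ, (Matrix.of fun i j => v i (e j)).det ≠ 0 := by
  have hspan : ⊤ ≤ Submodule.span k (Set.range (flip v)) :=
    (span_flip_eq_top_iff_linearIndependent.2 hv).ge
  let columns := Module.Basis.ofSpan hspan
  let basis := columns.reindex (columns.indexEquiv (Pi.basisFun k ι))
  have mem_range (j : ι) : basis j ∈ Set.range (flip v) :=
    Module.Basis.ofSpan_subset hspan (by simp [basis, columns])
  choose e he using mem_range
  have hcol : (Matrix.of fun i j => v i (e j)).col = basis := funext he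
  refine ⟨e, IsUnit.ne_zero ?_⟩
  rw [← Matrix.isUnit_iff_isUnit_det, ← Matrix.linearIndependent_cols_iff_isUnit, hcol]
  exact basis.linearIndependent

theorem linearIndependent_of_det_ne_zero {ι κ R : Type*} [Fintype ι] [DecidableEq ι] [CommRing R]
    [IsDomain R] {v : ι → κ → R} (e : ι → κ) (he : (Matrix.of fun i j => v i (e j)).det ≠ 0) :
    LinearIndependent R v :=
  .of_comp (LinearMap.funLeft R R e) (Matrix.linearIndependent_rows_of_det_ne_zero he)

theorem linearIndependent_map_of_linearIndependent_map {R K k : Type*} [CommRing R] [CommRing K]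
    [IsDomain K] [Field k] {ψ : R →+* K} (hψ : Function.Injective ψ) (φ : R →+* k) {ι κ : Type*}
    {v : ι → κ → R} (hv : LinearIndependent k fun i j => φ (v i j)) :
    LinearIndependent K fun i j => ψ (v i j) := by
  classical
  rw [linearIndependent_iff_finset_linearIndependent] at hv ⊢
  intro s
  obtain ⟨e, he⟩ := exists_det_ne_zero_of_linearIndependent (hv s)
  let A : Matrix s s R := .of fun i j => v i (e j)
  have hφ : φ A.det ≠ 0 := by rwa [φ.map_det]
  have hψA : ψ A.det ≠ 0 := (map_ne_zero_iff ψ hψ).2 (ne_zero_of_map hφ)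
  rw [ψ.map_det] at hψA
  exact linearIndependent_of_det_ne_zero e hψA

theorem linearIndependent_comp_basis_iff {ι R M N : Type*} [Semiring R] [AddCommMonoid M]
    [Module R M] [AddCommMonoid N] [Module R N] (b : Module.Basis ι R M) (L : M →ₗ[R] N) :
    LinearIndependent R (L ∘ b) ↔ Function.Injective L := by
  have hcomp : Finsupp.linearCombination R (L ∘ b) = L ∘ₗ b.repr.symm := by ext; simp
  rw [linearIndependent_iff_injective_finsuppLinearCombination, hcomp]
  exact Function.Injective.of_comp_iff' L b.repr.symm.bijective

theorem exists_not_linearIndependent_pow {A S : Type*} [CommRing A] [IsDomain A] [CommRing S]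
    [Algebra A S] {x : S} (hx : IsAlgebraic A x) (e : ℕ → ℕ) :
    ∃ m, ¬ LinearIndependent A fun i : Fin m => x ^ e i := by
  obtain ⟨y, hy, hint⟩ := hx.exists_integral_multiple
  let B := Algebra.adjoin A {y • x}
  have : Module.Finite A B := .of_fg hint.fg_adjoin_singleton
  refine ⟨Module.finrank A B + 1, fun hli => ?_⟩
  let v (i : Fin (Module.finrank A B + 1)) : B :=
    ⟨y • x, Algebra.self_mem_adjoin_singleton _ _⟩ ^ e i
  have hv : LinearIndependent A v := by
    refine .of_comp B.val.toLinearMap ?_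
    rw [Fintype.linearIndependent_iff] at hli ⊢
    intro c hc i
    have hcy : c i * y ^ e i = 0 :=
      hli (fun i => c i * y ^ e i) (by simpa [v, smul_pow, mul_smul] using hc) i
    exact (mul_eq_zero.1 hcy).resolve_right (pow_ne_zero _ hy)
  simpa using hv.fintype_card_le_finrank

end LinearAlgebra

section Reduction

variable {R : Type*} [CommRing R]

theorem transcendental_iff_linearIndependent_coeff (f : R⟦X⟧) :
    Transcendental R[X] f ↔ LinearIndependent R fun (ij : ℕ × ℕ) n =>
      PowerSeries.coeff n (PowerSeries.X ^ ij.1 * f ^ ij.2) := by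
  let basis := (Polynomial.basisMonomials R).smulTower (Polynomial.basisMonomials R[X])
  let L : R[X][X] →ₗ[R] ℕ → R :=
    LinearMap.pi PowerSeries.coeff ∘ₗ (Polynomial.aeval f).toLinearMap.restrictScalars R
  have L_injective_iff :
      Function.Injective L ↔ Function.Injective (Polynomial.aeval (R := R[X]) f) :=
    Function.Injective.of_comp_iff (f := LinearMap.pi PowerSeries.coeff)
      (fun _ _ h => PowerSeries.ext (congrFun h)) _
  have L_comp_basis : L ∘ basis = fun ij n =>
      PowerSeries.coeff n (PowerSeries.X ^ ij.1 * f ^ ij.2) := by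
    ext ij n
    simp [L, basis, Algebra.smul_def, PowerSeries.algebraMap_apply',
      Polynomial.monomial_one_right_eq_X_pow]
  rw [transcendental_iff_injective, ← L_injective_iff, ← L_comp_basis,
    linearIndependent_comp_basis_iff]

theorem coeff_X_pow_mul_map_pow {A : Type*} [CommRing A] (χ : R →+* A) (f : R⟦X⟧) (i j n : ℕ) :
    PowerSeries.coeff n (PowerSeries.X ^ i * PowerSeries.map χ f ^ j) =
      χ (PowerSeries.coeff n (PowerSeries.X ^ i * f ^ j)) := by
  simp [← PowerSeries.coeff_map]

theorem isAlgebraic_map_of_isAlgebraic_map {K k : Type*} [CommRing K] [IsDomain K] [Field k]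
    {ψ : R →+* K} (hψ : Function.Injective ψ) (φ : R →+* k) {f : R⟦X⟧}
    (hf : IsAlgebraic K[X] (PowerSeries.map ψ f)) : IsAlgebraic k[X] (PowerSeries.map φ f) := by
  suffices Transcendental k[X] (PowerSeries.map φ f) → Transcendental K[X] (PowerSeries.map ψ f)
    from by_contra fun hφ => this hφ hf
  simp only [transcendental_iff_linearIndependent_coeff, coeff_X_pow_mul_map_pow]
  exact linearIndependent_map_of_linearIndependent_map hψ φ

end Reduction

section Cartier

/-- The Cartier operator `∑ aₙ Xⁿ ↦ ∑ a_{qn+r} Xⁿ`, which extracts the coefficients whose index is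
congruent to `r` modulo `q`. The residue `r` is not reduced modulo `q`; the intended range is
`r < q`. -/
noncomputable def cartier (R : Type*) [Semiring R] (q r : ℕ) : R⟦X⟧ →ₗ[R] R⟦X⟧ where
  toFun h := PowerSeries.mk fun n => PowerSeries.coeff (q * n + r) h
  map_add' _ _ := by ext; simp
  map_smul' _ _ := by ext; simp

@[simp]
theorem coeff_cartier {R : Type*} [Semiring R] (q r : ℕ) (h : R⟦X⟧) (n : ℕ) :
    PowerSeries.coeff n (cartier R q r h) = PowerSeries.coeff (q * n + r) h := by
  simp [cartier]

theorem isAutomatic_coeff_of_finite_of_forall_cartier_mem {R : Type*} [Semiring R] {q : ℕ}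
    (hq : 1 < q) {H : Set R⟦X⟧} (hfin : H.Finite) (hH : ∀ h ∈ H, ∀ r < q, cartier R q r h ∈ H)
    {f : R⟦X⟧} (hf : f ∈ H) : IsAutomatic q fun n => PowerSeries.coeff n f := by
  let coeffs (h : R⟦X⟧) (n : ℕ) : R := PowerSeries.coeff n h
  refine isAutomatic_of_finite_of_forall_subsequence_mem hq (hfin.image coeffs) ?_
    (Set.mem_image_of_mem coeffs hf)
  rintro _ ⟨h, hh, rfl⟩ r hr
  exact ⟨cartier R q r h, hH h hh r hr, funext (coeff_cartier q r h)⟩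

theorem exists_cartier_ne_zero {R : Type*} [Semiring R] {q : ℕ} (hq : q ≠ 0) {h : R⟦X⟧}
    (hh : h ≠ 0) : ∃ r < q, cartier R q r h ≠ 0 := by
  obtain ⟨n, hn⟩ := PowerSeries.exists_coeff_ne_zero_iff_ne_zero.2 hh
  refine ⟨n % q, Nat.mod_lt n (Nat.pos_of_ne_zero hq), fun h0 => hn ?_⟩
  simpa [Nat.div_add_mod] using congrArg (PowerSeries.coeff (n / q)) h0

theorem exists_coe_eq_cartier_coe {R : Type*} [CommSemiring R] {q : ℕ} (hq : q ≠ 0) (r : ℕ)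
    {p : R[X]} {D : ℕ} (hp : p.natDegree ≤ q * D) :
    ∃ p' : R[X], p'.natDegree ≤ D ∧ (p' : R⟦X⟧) = cartier R q r p := by
  refine ⟨PowerSeries.trunc (D + 1) (cartier R q r p),
    Nat.lt_succ_iff.1 (PowerSeries.natDegree_trunc_lt _ _), ?_⟩
  ext n
  rw [Polynomial.coeff_coe, PowerSeries.coeff_trunc]
  split_ifs with hn
  · rfl
  · have hqn : q * D < q * n := Nat.mul_lt_mul_of_pos_left (by omega) (Nat.pos_of_ne_zero hq)
    rw [coeff_cartier, Polynomial.coeff_coe, Polynomial.coeff_eq_zero_of_natDegree_lt (by omega)]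

theorem cartier_mul_expand {R : Type*} [CommRing R] {q r : ℕ} (hq : q ≠ 0) (hr : r < q)
    (h g : R⟦X⟧) : cartier R q r (h * PowerSeries.expand q hq g) = cartier R q r h * g := by
  ext n
  simp only [coeff_cartier, PowerSeries.coeff_mul]
  symm
  refine Finset.sum_of_injOn (fun ij => (q * ij.1 + r, q * ij.2)) ?_ ?_ ?_ ?_
  · rintro ⟨i, j⟩ - ⟨i', j'⟩ - hij
    simpa [hq] using hij
  · rintro ⟨i, j⟩ hij
    have hij : i + j = n := by simpa using hij
    simp only [Finset.mem_coe, Finset.HasAntidiagonal.mem_antidiagonal, ← hij]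
    ring
  · rintro ⟨i, j⟩ hij hnot
    rw [Finset.HasAntidiagonal.mem_antidiagonal] at hij
    rw [PowerSeries.coeff_expand_of_not_dvd, mul_zero]
    rintro ⟨j, rfl⟩
    have hj : j < n + 1 := Nat.lt_of_mul_lt_mul_left (a := q) (by rw [mul_add]; omega)
    obtain ⟨l, rfl⟩ := Nat.exists_eq_add_of_le (Nat.lt_succ_iff.1 hj)
    have hi : q * l + r = i := by rw [mul_add] at hij; omega
    exact hnot ⟨(l, j), by simp [add_comm], Prod.ext hi rfl⟩
  · rintro ⟨i, j⟩ -
    simp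

end Cartier

section Christol

theorem finite_setOf_natDegree_le (R : Type*) [Semiring R] [Finite R] (D : ℕ) :
    {p : R[X] | p.natDegree ≤ D}.Finite := by
  refine .of_injOn (f := fun p (i : Fin (D + 1)) => p.coeff i) (Set.mapsTo_univ _ _)
    (fun p hp p' hp' h => ?_) Set.finite_univ
  exact (Polynomial.ext_iff_natDegree_le hp hp').2 fun i hi =>
    congrFun h ⟨i, Nat.lt_succ_iff.2 hi⟩

variable {k : Type*} [Field k] [Fintype k]

local notation "q" => Fintype.card k

theorem expand_card_eq_pow (g : k⟦X⟧) : PowerSeries.expand q Fintype.card_ne_zero g = g ^ q := by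
  obtain ⟨p, hp⟩ := CharP.exists k
  obtain ⟨n, hprime, hcard⟩ := FiniteField.card k p
  have := Fact.mk hprime
  have hfrob : iterateFrobenius k p n = RingHom.id k := by
    ext x
    rw [iterateFrobenius_def, ← hcard, FiniteField.pow_card, RingHom.id_apply]
  simp only [hcard]
  rw [← MvPowerSeries.map_iterateFrobenius_expand p hprime.ne_zero g n, hfrob, MvPowerSeries.map_id]
  rfl

theorem cartier_mul_pow_card_pow_succ {r : ℕ} (hr : r < q) (h f : k⟦X⟧) (i : ℕ) :
    cartier k q r (h * f ^ q ^ (i + 1)) = cartier k q r h * f ^ q ^ i := by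
  rw [pow_succ, pow_mul, ← expand_card_eq_pow, cartier_mul_expand _ hr]

theorem exists_coe_mul_eq_sum_of_not_linearIndependent {f : k⟦X⟧} {m : ℕ}
    (hdep : ¬ LinearIndependent k[X] fun i : Fin m => f ^ q ^ (i : ℕ)) :
    ∃ (l : ℕ) (d : k[X]) (a : Fin l → k[X]), d ≠ 0 ∧
      d * f = ∑ i : Fin l, a i * f ^ q ^ (i + 1 : ℕ) := by
  have smul_eq (p : k[X]) (g : k⟦X⟧) : p • g = p * g := by
    simp [Algebra.smul_def, PowerSeries.algebraMap_apply']
  induction m with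
  | zero => exact absurd linearIndependent_empty_type hdep
  | succ m ih =>
    obtain ⟨a, ha, i, hi⟩ := Fintype.not_linearIndependent_iff.1 hdep
    simp only [smul_eq, Fin.sum_univ_succ, Fin.val_zero, pow_zero, pow_one, Fin.val_succ] at ha
    by_cases h0 : a 0 = 0
    · obtain ⟨j, rfl⟩ := Fin.exists_succ_eq_of_ne_zero (x := i) (by rintro rfl; exact hi h0)
      obtain ⟨r, hr, hrj⟩ := exists_cartier_ne_zero (Fintype.card_ne_zero (α := k))
        (Polynomial.coe_eq_zero_iff.not.2 hi)
      choose a' _ ha' using fun i : Fin m => exists_coe_eq_cartier_coe Fintype.card_ne_zero r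
        (Nat.le_mul_of_pos_left (a i.succ).natDegree (Fintype.card_pos (α := k)))
      refine ih (Fintype.not_linearIndependent_iff.2 ⟨a', ?_, j, ?_⟩)
      · simpa [h0, smul_eq, cartier_mul_pow_card_pow_succ hr, ← ha'] using
          congrArg (cartier k q r) ha
      · rwa [Ne, ← Polynomial.coe_eq_zero_iff, ha']
    · exact ⟨m, a 0, fun i => -a i.succ, h0, by simpa using eq_neg_of_add_eq_zero_left ha⟩

/-- The `k`-space of combinations of the Frobenius powers `f ^ q ^ i`, `i ≤ m`, where `q = #k`,
whose coefficients are polynomials of degree at most `D`. -/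
def frobeniusSpan (f : k⟦X⟧) (D m : ℕ) : Submodule k k⟦X⟧ :=
  Submodule.span k {h | ∃ p : k[X], p.natDegree ≤ D ∧ ∃ i ≤ m, h = p * f ^ q ^ i}

theorem coe_mul_pow_mem_frobeniusSpan (f : k⟦X⟧) {D m i : ℕ} {p : k[X]} (hp : p.natDegree ≤ D)
    (hi : i ≤ m) : p * f ^ q ^ i ∈ frobeniusSpan f D m :=
  Submodule.subset_span ⟨p, hp, i, hi, rfl⟩

theorem finite_frobeniusSpan (f : k⟦X⟧) (D m : ℕ) : (frobeniusSpan f D m : Set k⟦X⟧).Finite := by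
  have hfin : {h : k⟦X⟧ | ∃ p : k[X], p.natDegree ≤ D ∧ ∃ i ≤ m, h = p * f ^ q ^ i}.Finite := by
    refine (((finite_setOf_natDegree_le k D).prod (Set.finite_Iic m)).image
      fun pi : k[X] × ℕ => (pi.1 : k⟦X⟧) * f ^ q ^ pi.2).subset ?_
    rintro _ ⟨p, hp, i, hi, rfl⟩
    exact ⟨(p, i), ⟨hp, hi⟩, rfl⟩
  have : Module.Finite k (frobeniusSpan f D m) := FiniteDimensional.span_of_finite k hfin
  exact Module.finite_of_finite k

variable {f : k⟦X⟧} {D m r : ℕ}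

theorem cartier_coe_mul_pow_succ_mem_frobeniusSpan (hr : r < q) {p : k[X]}
    (hp : p.natDegree ≤ q * D) {i : ℕ} (hi : i ≤ m) :
    cartier k q r (p * f ^ q ^ (i + 1)) ∈ frobeniusSpan f D m := by
  obtain ⟨p', hp', hpp'⟩ := exists_coe_eq_cartier_coe Fintype.card_ne_zero r hp
  rw [cartier_mul_pow_card_pow_succ hr, ← hpp']
  exact coe_mul_pow_mem_frobeniusSpan f hp' hi

variable {d : k[X]} {a : Fin m → k[X]}

theorem cartier_coe_pow_mul_coe_mul_mem_frobeniusSpan (hr : r < q) (hd : d.natDegree ≤ D)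
    (ha : ∀ i, (a i).natDegree ≤ D) (hf : d * f = ∑ i : Fin m, a i * f ^ q ^ (i + 1 : ℕ))
    {p : k[X]} (hp : p.natDegree ≤ D) :
    cartier k q r (d ^ (q - 1) * (p * f)) ∈ frobeniusSpan f D m := by
  obtain ⟨s, hs⟩ := Nat.exists_eq_add_of_le' (Fintype.one_lt_card (α := k))
  have hsum : (d : k⟦X⟧) ^ (q - 1) * (p * f) =
      ∑ i : Fin m, ((d ^ s * p * a i : k[X]) : k⟦X⟧) * f ^ q ^ (i + 1 : ℕ) :=
    calc (d : k⟦X⟧) ^ (q - 1) * (p * f) = d ^ s * p * (d * f) := by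
          rw [show q - 1 = s + 1 by omega]; ring
      _ = _ := by simp [hf, Finset.mul_sum, mul_assoc]
  rw [hsum, map_sum]
  refine Submodule.sum_mem _ fun i _ => cartier_coe_mul_pow_succ_mem_frobeniusSpan hr ?_ i.2.le
  calc (d ^ s * p * a i).natDegree ≤ s * D + D + D :=
        Polynomial.natDegree_mul_le_of_le (Polynomial.natDegree_mul_le_of_le
          (Polynomial.natDegree_pow_le_of_le s hd) hp) (ha i)
    _ = q * D := by rw [hs]; ring

theorem cartier_coe_pow_mul_mem_frobeniusSpan (hr : r < q) (hd : d.natDegree ≤ D)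
    (ha : ∀ i, (a i).natDegree ≤ D) (hf : d * f = ∑ i : Fin m, a i * f ^ q ^ (i + 1 : ℕ))
    {u : k⟦X⟧} (hu : u ∈ frobeniusSpan f D m) :
    cartier k q r (d ^ (q - 1) * u) ∈ frobeniusSpan f D m := by
  induction hu using Submodule.span_induction with
  | mem u hu =>
    obtain ⟨p, hp, i | i, hi, rfl⟩ := hu
    · rw [pow_zero, pow_one]
      exact cartier_coe_pow_mul_coe_mul_mem_frobeniusSpan hr hd ha hf hp
    · have hdeg : (d ^ (q - 1) * p).natDegree ≤ q * D :=
        calc (d ^ (q - 1) * p).natDegree ≤ (q - 1) * D + D :=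
              Polynomial.natDegree_mul_le_of_le (Polynomial.natDegree_pow_le_of_le _ hd) hp
          _ = q * D := by
              rw [← Nat.succ_mul, Nat.succ_eq_add_one, Nat.sub_add_cancel Fintype.card_pos]
      simpa [mul_assoc] using
        cartier_coe_mul_pow_succ_mem_frobeniusSpan (f := f) hr hdeg (Nat.le_of_succ_le hi)
  | zero => simp
  | add u v _ _ hu hv => rw [mul_add, map_add]; exact add_mem hu hv
  | smul c u _ hu => rw [mul_smul_comm, map_smul]; exact Submodule.smul_mem _ c hu

theorem coe_mul_cartier_mem_frobeniusSpan (hr : r < q) (hd : d.natDegree ≤ D)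
    (ha : ∀ i, (a i).natDegree ≤ D) (hf : d * f = ∑ i : Fin m, a i * f ^ q ^ (i + 1 : ℕ))
    {h : k⟦X⟧} (hh : d * h ∈ frobeniusSpan f D m) :
    d * cartier k q r h ∈ frobeniusSpan f D m := by
  have hcartier : d * cartier k q r h = cartier k q r (d ^ (q - 1) * (d * h)) :=
    calc d * cartier k q r h = cartier k q r h * (d : k⟦X⟧) ^ q ^ 0 := by
          rw [pow_zero, pow_one, mul_comm]
      _ = cartier k q r (h * (d : k⟦X⟧) ^ q) := by
          rw [← cartier_mul_pow_card_pow_succ hr, zero_add, pow_one]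
      _ = cartier k q r (d ^ (q - 1) * (d * h)) := by
          rw [← mul_assoc, pow_sub_one_mul Fintype.card_ne_zero, mul_comm]
  rw [hcartier]
  exact cartier_coe_pow_mul_mem_frobeniusSpan hr hd ha hf hh

theorem isAutomatic_coeff_of_isAlgebraic (hf : IsAlgebraic k[X] f) :
    IsAutomatic q fun n => PowerSeries.coeff n f := by
  obtain ⟨_, hdep⟩ := exists_not_linearIndependent_pow hf (q ^ ·)
  obtain ⟨m, d, a, hd0, hrel⟩ := exists_coe_mul_eq_sum_of_not_linearIndependent hdep
  let D := max d.natDegree (Finset.univ.sup fun i => (a i).natDegree)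
  have hd : d.natDegree ≤ D := le_max_left _ _
  have ha (i : Fin m) : (a i).natDegree ≤ D :=
    (Finset.le_sup (f := fun i => (a i).natDegree) (Finset.mem_univ i)).trans (le_max_right _ _)
  have hinj : Function.Injective fun h : k⟦X⟧ => d * h :=
    mul_right_injective₀ (Polynomial.coe_eq_zero_iff.not.2 hd0)
  refine isAutomatic_coeff_of_finite_of_forall_cartier_mem Fintype.one_lt_card
    (H := {h : k⟦X⟧ | d * h ∈ frobeniusSpan f D m})
    ((finite_frobeniusSpan f D m).preimage hinj.injOn)
    (fun h hh r hr => coe_mul_cartier_mem_frobeniusSpan hr hd ha hrel hh) ?_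
  simpa using coe_mul_pow_mem_frobeniusSpan f hd m.zero_le

end Christol

theorem christol_corollary_general {R K k : Type*} [CommRing R] [CommRing K] [IsDomain K] [Field k]
    [Fintype k] {ψ : R →+* K} (hψ : Function.Injective ψ) (φ : R →+* k) (b : ℕ → R)
    (halg : IsAlgebraic K[X] (PowerSeries.mk fun n => ψ (b n))) :
    IsAutomatic (Fintype.card k) fun n => φ (b n) := by
  have hred : IsAlgebraic k[X] (PowerSeries.map φ (PowerSeries.mk b)) :=
    isAlgebraic_map_of_isAlgebraic_map hψ φ halg
  simpa using isAutomatic_coeff_of_isAlgebraic hred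

theorem christol_corollary (b : ℕ → ℤ)
    (halg : IsAlgebraic (Polynomial ℚ) (PowerSeries.mk (fun n => (b n : ℚ))))
    (q : ℕ) (hq : q.Prime) :
    IsAutomatic q (fun n => (b n : ZMod q)) := by
  have : Fact q.Prime := ⟨hq⟩
  simpa using
    christol_corollary_general (RingHom.injective_int (Int.castRingHom ℚ))
      (Int.castRingHom (ZMod q)) b halg
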